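/- Let M and T be two popular matchings of G, each of maximum size among all popular matchings of G. Then |M(u)| = |T(u)| for every vertex u ∈ A∪B; i.e., every vertex is matched to the same number of partners in every maximum-size popular matching, and in particular all maximum-size popular matchings match the same set of vertices. -/

import Mathlib

/-!
The proof exhibits one popular matching `N` with `|T(u)| ≤ |N(u)|` for every popular `T` and every
vertex `u`. If `T` has maximum size among popular matchings then `|N| ≤ |T|`, so all these
inequalities are equalities; applying this to both given matchings yields the theorem.

The matching `N` is stable in a two-level instance: every edge is doubled into a copy of level
`false` and a copy of level `true`; vertices of `A` prefer any level `false` copy to any level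
`true` copy, vertices of `B` the other way round, and within a level the original ranks decide.
Both sides choose greedily, taking at most one copy per partner. This choice is substitutable
(`rejected_mono`), so the Knaster–Tarski theorem gives a stable set of contracts
(`exists_offers`, `PrefInstance.exists_levelStable`).

The levels serve as a dual certificate. An edge of `N` at level `false` has price `1` at its
`A`-end and `-1` at its `B`-end, and the opposite at level `true`, so prices cancel along `N`. An
edge `(a, b)` outside `N` gets at each end a cost in `{-2, 0, 2}` bounding the vote for it against
a partner minus the price of that partner; since neither of its copies blocks, its two costs have
sum at most `0`. Weak duality (`le_deltaSet`) then gives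
`Δ(N, T) ≥ ∑ u, max (|T(u)| - |N(u)|) 0` for every matching `T`
(`PrefInstance.LevelStable.surplus_le_Delta`). Hence `N` is popular. Moreover
`Δ(T, N) ≤ -Δ(N, T)`, so for a popular `T` the right-hand side vanishes.
-/

/-!
Many-to-many matchings with two-sided preferences, votes, and popularity,
following "Popular Matchings in the Many-to-Many Setting".
-/

/-- The vote of a vertex with rank function `r` (smaller rank = more preferred)
comparing two options, where `none` stands for `null` (ranked below everything). -/
def vote {β : Type*} [DecidableEq β] (r : β → ℕ) : Option β → Option β → ℤ
  | none, none => 0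
  | some _, none => 1
  | none, some _ => -1
  | some x, some y => if x = y then 0 else if r x < r y then 1 else -1

/-- The common length `k` of the arrays compared in `δ_u(S₀,S₁)`:
after padding the smaller of `S₀, S₁` with nulls and removing common elements. -/
def kOf {β : Type*} [DecidableEq β] (S₀ S₁ : Finset β) : ℕ :=
  max S₀.card S₁.card - (S₀ ∩ S₁).card

/-- `S₀ ∖ S₁`, viewed as an array of `Option`s padded with `none` (null) to length `k`. -/
noncomputable def padded {β : Type*} [DecidableEq β] (S₀ S₁ : Finset β) (k : ℕ) : List (Option β) :=
  ((S₀ \ S₁).toList.map some) ++ List.replicate (k - (S₀ \ S₁).card) none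

/-- `δ_u(S₀,S₁)`: the minimum, over all permutations `σ` of `{1,…,k}`, of
`Σ_i vote_u(S'₀[i], S'₁[σ(i)])`. -/
noncomputable def deltaSet {β : Type*} [DecidableEq β] (r : β → ℕ) (S₀ S₁ : Finset β) : ℤ :=
  Finset.univ.inf' ⟨1, Finset.mem_univ 1⟩ fun σ : Equiv.Perm (Fin (kOf S₀ S₁)) =>
    ∑ i : Fin (kOf S₀ S₁),
      vote r ((padded S₀ S₁ (kOf S₀ S₁)).getD (i : ℕ) none)
             ((padded S₁ S₀ (kOf S₀ S₁)).getD (σ i : ℕ) none)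

/-- A bipartite instance `G = (A ∪ B, E)` with capacities `≥ 1` and strict
preferences of every vertex over its neighbors (given by injective-on-neighbors
rank functions; smaller rank = more preferred). -/
structure PrefInstance (α β : Type*) [Fintype α] [Fintype β] [DecidableEq α] [DecidableEq β] where
  E : Finset (α × β)
  capA : α → ℕ
  capB : β → ℕ
  rankA : α → β → ℕ
  rankB : β → α → ℕ
  capA_pos : ∀ a, 1 ≤ capA a
  capB_pos : ∀ b, 1 ≤ capB b
  rankA_injOn : ∀ a, Set.InjOn (rankA a) {b | (a, b) ∈ E}
  rankB_injOn : ∀ b, Set.InjOn (rankB b) {a | (a, b) ∈ E}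

namespace PrefInstance

variable {α β : Type*} [Fintype α] [Fintype β] [DecidableEq α] [DecidableEq β]

/-- `M(a)`: the set of `B`-vertices matched to `a` in `M`. -/
def rowSet (M : Finset (α × β)) (a : α) : Finset β :=
  Finset.univ.filter fun b => (a, b) ∈ M

/-- `M(b)`: the set of `A`-vertices matched to `b` in `M`. -/
def colSet (M : Finset (α × β)) (b : β) : Finset α :=
  Finset.univ.filter fun a => (a, b) ∈ M

variable (I : PrefInstance α β)

/-- `M` is a matching in `G`: a subset of `E` respecting all capacities. -/
def IsMatching (M : Finset (α × β)) : Prop :=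
  M ⊆ I.E ∧ (∀ a, (rowSet M a).card ≤ I.capA a) ∧ (∀ b, (colSet M b).card ≤ I.capB b)

/-- `Δ_a(M₀,M₁) = δ_a(M₀(a), M₁(a))` for `a ∈ A`. -/
noncomputable def DeltaA (M₀ M₁ : Finset (α × β)) (a : α) : ℤ :=
  deltaSet (I.rankA a) (rowSet M₀ a) (rowSet M₁ a)

/-- `Δ_b(M₀,M₁) = δ_b(M₀(b), M₁(b))` for `b ∈ B`. -/
noncomputable def DeltaB (M₀ M₁ : Finset (α × β)) (b : β) : ℤ :=
  deltaSet (I.rankB b) (colSet M₀ b) (colSet M₁ b)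

/-- `Δ(M₀,M₁) = Σ_{u ∈ A∪B} Δ_u(M₀,M₁)`. -/
noncomputable def Delta (M₀ M₁ : Finset (α × β)) : ℤ :=
  (∑ a, I.DeltaA M₀ M₁ a) + ∑ b, I.DeltaB M₀ M₁ b

/-- `M` is a popular matching: `Δ(M,T) ≥ 0` against every matching `T`. -/
def Popular (M : Finset (α × β)) : Prop :=
  I.IsMatching M ∧ ∀ T, I.IsMatching T → 0 ≤ I.Delta M T

/-- `M` is a weakly popular matching: `Δ(T,M) ≤ 0` for every matching `T`. -/
def WeaklyPopular (M : Finset (α × β)) : Prop :=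
  I.IsMatching M ∧ ∀ T, I.IsMatching T → I.Delta T M ≤ 0

/-- The edge `(a,b) ∈ E ∖ M` blocks `M`. -/
def Blocks (M : Finset (α × β)) (a : α) (b : β) : Prop :=
  (a, b) ∈ I.E ∧ (a, b) ∉ M ∧
  ((rowSet M a).card < I.capA a ∨ ∃ b' ∈ rowSet M a, I.rankA a b < I.rankA a b') ∧
  ((colSet M b).card < I.capB b ∨ ∃ a' ∈ colSet M b, I.rankB b a < I.rankB b a')

/-- `M` is a pairwise-stable matching: no edge blocks it. -/
def Stable (M : Finset (α × β)) : Prop :=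
  I.IsMatching M ∧ ∀ a b, ¬ I.Blocks M a b

end PrefInstance

/-! ### Bounding `deltaSet` -/

section Votes

lemma sum_getD_eq {γ : Type*} (P : List (Option γ)) (k : ℕ) (hk : P.length = k) (f : Option γ → ℤ) :
    ∑ i : Fin k, f (P.getD (i : ℕ) none) = (P.map f).sum := by
  subst hk
  rw [← Fin.sum_univ_fun_getElem]
  refine Finset.sum_congr rfl fun i _ => ?_
  rw [List.getD_eq_getElem]

variable {γ : Type*} [DecidableEq γ]

lemma card_sdiff_le_kOf (S₀ S₁ : Finset γ) : (S₀ \ S₁).card ≤ kOf S₀ S₁ := by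
  unfold kOf
  have := Finset.card_sdiff_add_card_inter S₀ S₁
  omega

lemma kOf_comm (S₀ S₁ : Finset γ) : kOf S₀ S₁ = kOf S₁ S₀ := by
  unfold kOf
  rw [max_comm, Finset.inter_comm]

lemma padded_length (S₀ S₁ : Finset γ) (k : ℕ) (hk : (S₀ \ S₁).card ≤ k) :
    (padded S₀ S₁ k).length = k := by
  simp [padded]
  omega

lemma padded_sum (S₀ S₁ : Finset γ) (k : ℕ) (f : Option γ → ℤ) :
    ((padded S₀ S₁ k).map f).sum =
      ∑ x ∈ S₀ \ S₁, f (some x) + ((k - (S₀ \ S₁).card : ℕ) : ℤ) * f none := by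
  simp [padded, Function.comp_def]

lemma getD_padded (S₀ S₁ : Finset γ) (k i : ℕ) (hk : (S₀ \ S₁).card ≤ k) (hi : i < k) :
    ((padded S₀ S₁ k).getD i none = none ∧ (S₀ \ S₁).card < k) ∨
      ∃ x ∈ S₀ \ S₁, (padded S₀ S₁ k).getD i none = some x := by
  have hl := padded_length S₀ S₁ k hk
  have hm : (padded S₀ S₁ k).getD i none ∈ padded S₀ S₁ k := by
    rw [List.getD_eq_getElem _ _ (by omega)]
    exact List.getElem_mem _
  generalize (padded S₀ S₁ k).getD i none = z at hm
  unfold padded at hm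
  rw [List.mem_append] at hm
  rcases hm with hm | hm
  · right
    simp only [List.mem_map, Finset.mem_toList] at hm
    obtain ⟨x, hx, rfl⟩ := hm
    exact ⟨x, hx, rfl⟩
  · left
    rw [List.mem_replicate] at hm
    exact ⟨hm.2, by omega⟩

lemma vote_add_vote_le (r : γ → ℕ) (x y : Option γ) : vote r x y + vote r y x ≤ 0 := by
  cases x <;> cases y <;> simp only [vote] <;> grind

/-- Comparing both ways along one and the same pairing gives opposite vote counts, and each
direction minimizes over all pairings. -/
lemma deltaSet_add_le (r : γ → ℕ) (S₀ S₁ : Finset γ) :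
    deltaSet r S₀ S₁ + deltaSet r S₁ S₀ ≤ 0 := by
  have h₀ : deltaSet r S₀ S₁ ≤ _ :=
    Finset.inf'_le _ (Finset.mem_univ (1 : Equiv.Perm (Fin (kOf S₀ S₁))))
  have h₁ : deltaSet r S₁ S₀ ≤ _ :=
    Finset.inf'_le _ (Finset.mem_univ (1 : Equiv.Perm (Fin (kOf S₁ S₀))))
  rw [kOf_comm S₁ S₀] at h₁
  refine (add_le_add h₀ h₁).trans ?_
  rw [← Finset.sum_add_distrib]
  exact Finset.sum_nonpos fun i _ => vote_add_vote_le r _ _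

/-- Weak duality at a single vertex: prices `p` on `S₀` and `c` on `S₁` which bound every
individual vote bound the whole comparison. The surplus `|S₁| - |S₀|` is the number of members of
`S₁` that have to be compared with null. -/
lemma le_deltaSet (r : γ → ℕ) (S₀ S₁ : Finset γ) (p c : γ → ℤ)
    (h₁ : ∀ e ∈ S₀ \ S₁, ∀ t ∈ S₁ \ S₀, -p e - c t ≤ vote r (some e) (some t))
    (h₂ : ∀ e ∈ S₀ \ S₁, -1 ≤ p e)
    (h₃ : S₀.card < S₁.card → ∀ t ∈ S₁ \ S₀, 2 ≤ c t) :
    -(∑ e ∈ S₀ \ S₁, p e) - ∑ t ∈ S₁ \ S₀, c t + ((S₁.card - S₀.card : ℕ) : ℤ)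
      ≤ deltaSet r S₀ S₁ := by
  have hk₀ := card_sdiff_le_kOf S₀ S₁
  have hk₁ := card_sdiff_le_kOf S₁ S₀
  rw [kOf_comm] at hk₁
  have c₀ := Finset.card_sdiff_add_card_inter S₀ S₁
  have c₁ := Finset.card_sdiff_add_card_inter S₁ S₀
  rw [Finset.inter_comm] at c₁
  have hkd : kOf S₀ S₁ = max S₀.card S₁.card - (S₀ ∩ S₁).card := rfl
  unfold deltaSet
  refine Finset.le_inf' _ _ fun σ _ => ?_
  generalize kOf S₀ S₁ = k at *
  let f : Option γ → ℤ := fun x => x.elim 1 (fun e => -p e)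
  let g : Option γ → ℤ := fun x => x.elim 0 (fun t => -c t)
  have hf := sum_getD_eq (padded S₀ S₁ k) k (padded_length _ _ _ hk₀) f
  have hg := sum_getD_eq (padded S₁ S₀ k) k (padded_length _ _ _ hk₁) g
  rw [padded_sum] at hf hg
  rw [← Equiv.sum_comp σ] at hg
  have hsurplus : k - (S₀ \ S₁).card = S₁.card - S₀.card := by omega
  rw [hsurplus] at hf
  simp only [f, g, Option.elim, Finset.sum_neg_distrib, mul_one, mul_zero, add_zero] at hf hg
  calc _ = _ := by rw [sub_eq_add_neg, ← hg, add_right_comm, ← hf, ← Finset.sum_add_distrib]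
    _ ≤ _ := Finset.sum_le_sum fun i _ => ?_
  rcases getD_padded S₀ S₁ k i hk₀ i.2 with ⟨h0, hlt⟩ | ⟨e, he, h0⟩ <;>
  rcases getD_padded S₁ S₀ k (σ i) hk₁ (σ i).2 with ⟨h1, hlt'⟩ | ⟨t, ht, h1⟩ <;>
  rw [h0, h1]
  · omega
  · have := h₃ (by omega) t ht
    simp only [vote]
    omega
  · have := h₂ e he
    simp only [vote]
    omega
  · have := h₁ e he t ht
    simp only
    omega

end Votes

/-! ### Stable sets of contracts -/

section Contracts

open scoped Classical in
/-- The partners that a vertex `v` has in the set `C` of contracts, where `own` and `oth` give the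
two parties of a contract. -/
noncomputable def partners {X V W : Type*} [Fintype W] (own : X → V) (oth : X → W) (C : Set X)
    (v : V) : Finset W :=
  Finset.univ.filter fun w => ∃ y ∈ C, own y = v ∧ oth y = w

lemma mem_partners {X V W : Type*} [Fintype W] {own : X → V} {oth : X → W} {C : Set X}
    {v : V} {w : W} : w ∈ partners own oth C v ↔ ∃ y ∈ C, own y = v ∧ oth y = w := by
  simp [partners]

/-- The contracts rejected by one side of the market when offered `Y`. Smaller `key` is better.
A contract is rejected if a better contract with the same partner is on offer, or if at least
`cap` many partners offer a better contract. -/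
def rejected {X V W L : Type*} [Fintype W] [LinearOrder L] (own : X → V) (oth : X → W)
    (key : X → L) (cap : V → ℕ) (Y : Set X) : Set X :=
  {x | x ∈ Y ∧ ((∃ y ∈ Y, own y = own x ∧ oth y = oth x ∧ key y < key x) ∨
    cap (own x) ≤ (partners own oth {y | y ∈ Y ∧ key y < key x} (own x)).card)}

variable {X V W L : Type*} [Fintype W] [LinearOrder L]
  {own : X → V} {oth : X → W} {key : X → L} {cap : V → ℕ}

lemma partners_mono {C D : Set X} (h : C ⊆ D) (v : V) :
    partners own oth C v ⊆ partners own oth D v := by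
  intro w hw
  rw [mem_partners] at hw ⊢
  obtain ⟨y, hy, hyw⟩ := hw
  exact ⟨y, h hy, hyw⟩

/-- This is the substitutability of the choice `Y ↦ Y \ rejected Y`. -/
lemma rejected_mono : Monotone (rejected own oth key cap) := by
  rintro Y Z hYZ x ⟨hx, h⟩
  refine ⟨hYZ hx, h.imp ?_ ?_⟩
  · rintro ⟨y, hy, h⟩
    exact ⟨y, hYZ hy, h⟩
  · intro h
    exact h.trans (Finset.card_le_card (partners_mono
      (show {y | y ∈ Y ∧ key y < key x} ⊆ {y | y ∈ Z ∧ key y < key x} from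
        fun y hy => ⟨hYZ hy.1, hy.2⟩) _))

lemma chosen_unique (hkey : ∀ x y, own x = own y → key x = key y → x = y) {Y : Set X} {x y : X}
    (hx : x ∈ Y \ rejected own oth key cap Y) (hy : y ∈ Y \ rejected own oth key cap Y)
    (hown : own x = own y) (hoth : oth x = oth y) : x = y := by
  rcases lt_trichotomy (key x) (key y) with h | h | h
  · exact absurd ⟨hy.1, Or.inl ⟨x, hx.1, hown, hoth, h⟩⟩ hy.2
  · exact hkey x y hown h
  · exact absurd ⟨hx.1, Or.inl ⟨y, hy.1, hown.symm, hoth.symm, h⟩⟩ hx.2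

lemma chosen_card_le [Finite X] (hkey : ∀ x y, own x = own y → key x = key y → x = y) (Y : Set X) (v : V) :
    (partners own oth (Y \ rejected own oth key cap Y) v).card ≤ cap v := by
  classical
  set C := Y \ rejected own oth key cap Y with hC
  by_contra! hlt
  have hne : {x | x ∈ C ∧ own x = v}.Nonempty := by
    obtain ⟨w, hw⟩ := Finset.card_pos.mp ((Nat.zero_le _).trans_lt hlt)
    obtain ⟨y, hy, hyv, -⟩ := mem_partners.mp hw
    exact ⟨y, hy, hyv⟩
  -- The worst chosen contract at `v` has `cap v` better competitors, so it would be rejected.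
  obtain ⟨x, ⟨hxC, rfl⟩, hmax⟩ := Set.exists_max_image _ key (Set.toFinite _) hne
  refine hxC.2 ⟨hxC.1, Or.inr ?_⟩
  have hsub : (partners own oth C (own x)).erase (oth x) ⊆
      partners own oth {y | y ∈ Y ∧ key y < key x} (own x) := by
    intro w hw
    obtain ⟨hne, hw⟩ := Finset.mem_erase.mp hw
    obtain ⟨y, hy, hyv, rfl⟩ := mem_partners.mp hw
    refine mem_partners.mpr ⟨y, ⟨hy.1, lt_of_le_of_ne (hmax y ⟨hy, hyv⟩) fun h => hne ?_⟩, hyv, rfl⟩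
    rw [hkey y x hyv h]
  have := Finset.card_le_card hsub
  have := Finset.pred_card_le_card_erase (s := partners own oth C (own x)) (a := oth x)
  omega

/-- If no contract between the parties of the offered contract `x` is chosen, then the vertex has
filled its capacity with contracts better than `x`. -/
lemma full_of_not_chosen [Finite X]
    (hkey : ∀ x y, own x = own y → key x = key y → x = y) {Y : Set X} {x : X}
    (hx : x ∈ Y)
    (hno : ∀ y ∈ Y \ rejected own oth key cap Y, own y = own x → oth y ≠ oth x) :
    cap (own x) ≤ (partners own oth (Y \ rejected own oth key cap Y) (own x)).card ∧
      ∀ y ∈ Y \ rejected own oth key cap Y, own y = own x → key y < key x := by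
  set C := Y \ rejected own oth key cap Y with hC
  -- `z` is the best offered contract at this vertex whose partner is not chosen.
  obtain ⟨z, ⟨hzY, hzx, hzno⟩, hmin⟩ := Set.exists_min_image
    {z | z ∈ Y ∧ own z = own x ∧ ∀ y ∈ C, own y = own x → oth y ≠ oth z} key (Set.toFinite _)
    ⟨x, hx, rfl, hno⟩
  have hzR : z ∈ rejected own oth key cap Y := by
    by_contra h
    exact hzno z ⟨hzY, h⟩ hzx rfl
  have hcap : cap (own x) ≤ (partners own oth {y | y ∈ Y ∧ key y < key z} (own x)).card := by
    rcases hzR.2 with ⟨y, hy, hyz, hyo, hlt⟩ | h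
    · refine absurd hlt (not_lt.mpr (hmin y ⟨hy, hyz.trans hzx, ?_⟩))
      rwa [hyo]
    · rwa [hzx] at h
  refine ⟨hcap.trans (Finset.card_le_card fun w hw => ?_), fun y hy hyx => ?_⟩
  · obtain ⟨y, ⟨hyY, hlt⟩, hyx, rfl⟩ := mem_partners.mp hw
    by_contra hcon
    refine absurd hlt (not_lt.mpr (hmin y ⟨hyY, hyx, fun y' hy' hyx' ho => hcon ?_⟩))
    exact mem_partners.mpr ⟨y', hy', hyx', ho⟩
  · refine lt_of_lt_of_le ?_ (hmin x ⟨hx, rfl, hno⟩)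
    by_contra! hle
    rcases hle.eq_or_lt with h | h
    · exact hzno y hy hyx (by rw [hkey z y (hzx.trans hyx.symm) h])
    · refine hy.2 ⟨hy.1, Or.inr ?_⟩
      rw [hyx]
      exact hcap.trans (Finset.card_le_card
        (partners_mono
        (show {y' | y' ∈ Y ∧ key y' < key z} ⊆ {y' | y' ∈ Y ∧ key y' < key y} from
          fun y' hy' => ⟨hy'.1, hy'.2.trans h⟩) _))

/-- A fixed point of offers: each side is offered exactly what the other side does not reject.
It exists by the Knaster–Tarski theorem. -/
lemma exists_offers (R R' : Set X → Set X) (hR : Monotone R) (hR' : Monotone R')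
    (hsub : ∀ Y, R Y ⊆ Y) :
    ∃ Y Y' : Set X, Y \ R Y = Y' \ R' Y' ∧ Y ∪ Y' = Set.univ := by
  let f : Set X →o Set X := ⟨fun Y => (R' (R Y)ᶜ)ᶜ, fun Y Z h =>
    Set.compl_subset_compl.mpr (hR' (Set.compl_subset_compl.mpr (hR h)))⟩
  have hfix : (R' (R f.lfp)ᶜ)ᶜ = f.lfp := f.map_lfp
  refine ⟨f.lfp, (R f.lfp)ᶜ, ?_, ?_⟩
  · ext x
    have h1 : x ∈ f.lfp ↔ x ∉ R' (R f.lfp)ᶜ := by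
      conv_lhs => rw [← hfix]
      rfl
    simp only [Set.mem_sdiff, Set.mem_compl_iff]
    tauto
  · ext x
    have := @hsub f.lfp x
    simp only [Set.mem_union, Set.mem_compl_iff, Set.mem_univ, iff_true]
    tauto

end Contracts

/-! ### Prices at a vertex -/

section Prices

variable {γ : Type*}

/-- A vertex of capacity `cap`, with partners `S` at levels `lv`, has filled its capacity with
partners preferred to `t` at level `i`. Levels are compared first (`false` is the better one), then
ranks. -/
def Saturated (r : γ → ℕ) (cap : ℕ) (S : Finset γ) (lv : γ → Bool) (t : γ) (i : Bool) : Prop :=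
  cap ≤ S.card ∧ ∀ e ∈ S, toLex (lv e, r e) < toLex (i, r t)

/-- The price of a current partner, given by its level. -/
def price (lv : γ → Bool) (e : γ) : ℤ := if lv e then -1 else 1

open scoped Classical in
/-- The price of a potential new partner `t`: an upper bound on the vote for `t` against any
current partner `e` minus the price of `e`. -/
noncomputable def cost (r : γ → ℕ) (cap : ℕ) (S : Finset γ) (lv : γ → Bool) (t : γ) : ℤ :=
  if Saturated r cap S lv t false then -2 else if Saturated r cap S lv t true then 0 else 2

/-- The value `2` of `cost` at an unsaturated vertex leaves a slack of `1` for each new partner that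
is compared with null; this is where the surplus comes from. -/
lemma le_deltaSet_of_price [DecidableEq γ] (r : γ → ℕ) (cap : ℕ) (S₀ S₁ : Finset γ)
    (lv : γ → Bool) (hcap : S₁.card ≤ cap) :
    -(∑ e ∈ S₀ \ S₁, price lv e) - ∑ t ∈ S₁ \ S₀, cost r cap S₀ lv t +
      ((S₁.card - S₀.card : ℕ) : ℤ) ≤ deltaSet r S₀ S₁ := by
  refine le_deltaSet r S₀ S₁ _ _ (fun e he t ht => ?_) (fun e _ => ?_) (fun hlt t _ => ?_)
  · have he0 := (Finset.mem_sdiff.mp he).1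
    have hne : e ≠ t := by
      rintro rfl
      exact (Finset.mem_sdiff.mp ht).2 he0
    simp only [vote, if_neg hne]
    have hlex : ∀ i, Saturated r cap S₀ lv t i →
        (lv e = false ∧ i = true) ∨ (lv e = i ∧ r e < r t) := fun i h => by
      have := h.2 e he0
      rw [Prod.Lex.toLex_lt_toLex] at this
      simpa [Bool.lt_iff] using this
    have hf := hlex false
    have ht := hlex true
    unfold cost price
    cases hl : lv e <;> simp only [hl] at hf ht <;> grind
  · unfold price
    split_ifs <;> omega
  · have hns : ∀ i, ¬ Saturated r cap S₀ lv t i := fun i h => by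
      have := h.1
      omega
    simp [cost, hns]

end Prices

/-! ### The dominant matching -/

namespace PrefInstance

variable {α β : Type*} [Fintype α] [Fintype β] [DecidableEq α] [DecidableEq β]
  (I : PrefInstance α β)

/-- A matching together with levels of its edges that is stable with respect to the two-level
preferences: vertices of `A` prefer level `false`, vertices of `B` prefer level `true`, and neither
copy of an edge outside the matching blocks it. -/
def LevelStable (N : Finset (α × β)) (lv : α → β → Bool) : Prop :=
  I.IsMatching N ∧ ∀ a b, (a, b) ∈ I.E → (a, b) ∉ N → ∀ i,
    Saturated (I.rankA a) (I.capA a) (rowSet N a) (lv a) b i ∨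
    Saturated (I.rankB b) (I.capB b) (colSet N b) (fun a' => !lv a' b) a (!i)

/-- The contracts are two copies of every edge, one per level. At a fixed point of offers an edge
outside the matching has each of its copies offered to one of its endpoints, which is then full of
better contracts. -/
lemma exists_levelStable : ∃ N lv, I.LevelStable N lv := by
  classical
  let X := {e // e ∈ I.E} × Bool
  let fA : X → α := fun x => x.1.1.1
  let fB : X → β := fun x => x.1.1.2
  let keyA : X → Bool ×ₗ ℕ := fun x => toLex (x.2, I.rankA (fA x) (fB x))
  let keyB : X → Bool ×ₗ ℕ := fun x => toLex (!x.2, I.rankB (fB x) (fA x))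
  have hkeyA : ∀ x y, fA x = fA y → keyA x = keyA y → x = y := by
    rintro ⟨⟨⟨a, b⟩, hx⟩, i⟩ ⟨⟨⟨a', b'⟩, hy⟩, j⟩ (rfl : a = a') h
    have h' := toLex.injective h
    simp only [Prod.mk.injEq] at h'
    obtain ⟨rfl, h'⟩ := h'
    obtain rfl : b = b' := I.rankA_injOn a hx hy h'
    rfl
  have hkeyB : ∀ x y, fB x = fB y → keyB x = keyB y → x = y := by
    rintro ⟨⟨⟨a, b⟩, hx⟩, i⟩ ⟨⟨⟨a', b'⟩, hy⟩, j⟩ (rfl : b = b') h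
    have h' := toLex.injective h
    simp only [Prod.mk.injEq, Bool.not_inj_iff] at h'
    obtain ⟨rfl, h'⟩ := h'
    obtain rfl : a = a' := I.rankB_injOn b hx hy h'
    rfl
  obtain ⟨Y, Y', hC, hU⟩ := exists_offers (rejected fA fB keyA I.capA) (rejected fB fA keyB I.capB)
    rejected_mono rejected_mono (fun _ _ h => h.1)
  let C : Set X := Y \ rejected fA fB keyA I.capA Y
  have hCA : C = Y \ rejected fA fB keyA I.capA Y := rfl
  have hCB : C = Y' \ rejected fB fA keyB I.capB Y' := hC
  let N : Finset (α × β) := Finset.univ.filter fun e => ∃ x ∈ C, fA x = e.1 ∧ fB x = e.2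
  let lv : α → β → Bool := fun a b => decide (∃ x ∈ C, fA x = a ∧ fB x = b ∧ x.2 = true)
  have hN : ∀ a b, (a, b) ∈ N ↔ ∃ x ∈ C, fA x = a ∧ fB x = b := by simp [N]
  have hrow : ∀ a, rowSet N a = partners fA fB C a := by
    intro a
    ext b
    simp [rowSet, hN, mem_partners]
  have hcol : ∀ b, colSet N b = partners fB fA C b := by
    intro b
    ext a
    simp [colSet, hN, mem_partners, and_comm]
  have hlv : ∀ x ∈ C, lv (fA x) (fB x) = x.2 := by
    intro x hx
    cases hx2 : x.2
    · simp only [lv, decide_eq_false_iff_not]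
      rintro ⟨y, hy, h1, h2, h3⟩
      rw [chosen_unique hkeyA (hCA ▸ hy) (hCA ▸ hx) h1 h2, hx2] at h3
      exact absurd h3 (by simp)
    · simp only [lv, decide_eq_true_eq]
      exact ⟨x, hx, rfl, rfl, hx2⟩
  refine ⟨N, lv, ⟨?_, ?_, ?_⟩, ?_⟩
  · rintro ⟨a, b⟩ h
    obtain ⟨x, -, rfl, rfl⟩ := (hN a b).mp h
    exact x.1.2
  · intro a
    rw [hrow, hCA]
    exact chosen_card_le hkeyA Y a
  · intro b
    rw [hcol, hCB]
    exact chosen_card_le hkeyB Y' b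
  · intro a b hE hno i
    let x : X := (⟨(a, b), hE⟩, i)
    have hx : x ∈ Y ∪ Y' := hU ▸ Set.mem_univ x
    refine hx.imp (fun hx => ?_) (fun hx => ?_)
    · obtain ⟨h1, h2⟩ := full_of_not_chosen (own := fA) (oth := fB) (cap := I.capA) hkeyA hx
        fun y hy h1 h2 => hno ((hN a b).mpr ⟨y, hy, h1, h2⟩)
      rw [← hCA] at h1 h2
      refine ⟨by rwa [hrow], fun b' hb' => ?_⟩
      rw [hrow, mem_partners] at hb'
      obtain ⟨y, hy, hya, rfl⟩ := hb'
      have h := h2 y hy hya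
      simp only [keyA, ← hlv y hy] at h
      rw [hya] at h
      exact h
    · obtain ⟨h1, h2⟩ := full_of_not_chosen (own := fB) (oth := fA) (cap := I.capB) hkeyB hx
        fun y hy h1 h2 => hno ((hN a b).mpr ⟨y, hCB ▸ hy, h2, h1⟩)
      rw [← hCB] at h1 h2
      refine ⟨by rwa [hcol], fun a' ha' => ?_⟩
      rw [hcol, mem_partners] at ha'
      obtain ⟨y, hy, hyb, rfl⟩ := ha'
      have h := h2 y hy hyb
      simp only [keyB, ← hlv y hy] at h
      rw [hyb] at h
      exact h

lemma sum_rowSet_sdiff (N T : Finset (α × β)) (f : α → β → ℤ) :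
    ∑ a, ∑ b ∈ rowSet N a \ rowSet T a, f a b = ∑ e ∈ N \ T, f e.1 e.2 := by
  rw [Finset.sum_sigma']
  refine Finset.sum_bij' (fun x _ => (x.1, x.2)) (fun e _ => ⟨e.1, e.2⟩) ?_ ?_ ?_ ?_ ?_ <;>
    simp [rowSet]

lemma sum_colSet_sdiff (N T : Finset (α × β)) (f : α → β → ℤ) :
    ∑ b, ∑ a ∈ colSet N b \ colSet T b, f a b = ∑ e ∈ N \ T, f e.1 e.2 := by
  rw [Finset.sum_sigma']
  refine Finset.sum_bij' (fun x _ => (x.2, x.1)) (fun e _ => ⟨e.2, e.1⟩) ?_ ?_ ?_ ?_ ?_ <;>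
    simp [colSet]

lemma sum_card_rowSet (N : Finset (α × β)) : ∑ a, (rowSet N a).card = N.card := by
  have h := sum_rowSet_sdiff N ∅ (fun _ _ => 1)
  simp only [rowSet, Finset.notMem_empty, Finset.filter_false, Finset.sdiff_empty,
    Finset.sum_const, nsmul_eq_mul, mul_one] at h
  exact_mod_cast h

lemma sum_card_colSet (N : Finset (α × β)) : ∑ b, (colSet N b).card = N.card := by
  have h := sum_colSet_sdiff N ∅ (fun _ _ => 1)
  simp only [colSet, Finset.notMem_empty, Finset.filter_false, Finset.sdiff_empty,
    Finset.sum_const, nsmul_eq_mul, mul_one] at h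
  exact_mod_cast h

/-- A level-stable matching beats every matching `T` by at least the total number of extra partners
that vertices have in `T`. -/
lemma LevelStable.surplus_le_Delta {N : Finset (α × β)} {lv : α → β → Bool}
    (hN : I.LevelStable N lv) {T : Finset (α × β)} (hT : I.IsMatching T) :
    ∑ a, (((rowSet T a).card - (rowSet N a).card : ℕ) : ℤ) +
      ∑ b, (((colSet T b).card - (colSet N b).card : ℕ) : ℤ) ≤ I.Delta N T := by
  have hA := Finset.sum_le_sum fun a (_ : a ∈ Finset.univ) =>
    le_deltaSet_of_price (I.rankA a) (I.capA a) (rowSet N a) (rowSet T a) (lv a) (hT.2.1 a)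
  have hB := Finset.sum_le_sum fun b (_ : b ∈ Finset.univ) =>
    le_deltaSet_of_price (I.rankB b) (I.capB b) (colSet N b) (colSet T b) (fun a => !lv a b)
      (hT.2.2 b)
  simp only [Finset.sum_add_distrib, Finset.sum_sub_distrib, Finset.sum_neg_distrib] at hA hB
  rw [sum_rowSet_sdiff N T fun a b => price (lv a) b,
    sum_rowSet_sdiff T N fun a b => cost (I.rankA a) (I.capA a) (rowSet N a) (lv a) b] at hA
  rw [sum_colSet_sdiff N T fun a b => price (fun a => !lv a b) a,
    sum_colSet_sdiff T N fun a b =>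
      cost (I.rankB b) (I.capB b) (colSet N b) (fun a => !lv a b) a] at hB
  have hprice : ∑ e ∈ N \ T, price (lv e.1) e.2 +
      ∑ e ∈ N \ T, price (fun a => !lv a e.2) e.1 = 0 := by
    rw [← Finset.sum_add_distrib]
    refine Finset.sum_eq_zero fun e _ => ?_
    unfold price
    cases h : lv e.1 e.2 <;> simp [h]
  have hcost : ∑ e ∈ T \ N, cost (I.rankA e.1) (I.capA e.1) (rowSet N e.1) (lv e.1) e.2 +
      ∑ e ∈ T \ N, cost (I.rankB e.2) (I.capB e.2) (colSet N e.2) (fun a => !lv a e.2) e.1 ≤ 0 := by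
    rw [← Finset.sum_add_distrib]
    refine Finset.sum_nonpos fun e he => ?_
    obtain ⟨heT, heN⟩ := Finset.mem_sdiff.mp he
    have h₀ := hN.2 e.1 e.2 (hT.1 heT) heN false
    have h₁ := hN.2 e.1 e.2 (hT.1 heT) heN true
    simp only [Bool.not_false, Bool.not_true] at h₀ h₁
    -- The level `false` copy gives the cost `-2` at `a` or a cost of at most `0` at `b`; the level
    -- `true` copy gives the cost `-2` at `b` or a cost of at most `0` at `a`.
    unfold cost
    split_ifs <;> first | omega | (exfalso; tauto)
  unfold Delta DeltaA DeltaB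
  linarith

lemma LevelStable.popular {N : Finset (α × β)} {lv : α → β → Bool}
    (hN : I.LevelStable N lv) : I.Popular N :=
  ⟨hN.1, fun _ hT => le_trans (by positivity) (hN.surplus_le_Delta I hT)⟩

lemma Delta_add_le (M T : Finset (α × β)) : I.Delta M T + I.Delta T M ≤ 0 := by
  have hA := Finset.sum_nonpos fun a (_ : a ∈ Finset.univ) =>
    deltaSet_add_le (I.rankA a) (rowSet M a) (rowSet T a)
  have hB := Finset.sum_nonpos fun b (_ : b ∈ Finset.univ) =>
    deltaSet_add_le (I.rankB b) (colSet M b) (colSet T b)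
  rw [Finset.sum_add_distrib] at hA hB
  unfold Delta DeltaA DeltaB
  linarith

/-- A popular `T` does not lose to `N`, so the surplus of `T` over `N` vanishes. -/
lemma LevelStable.card_le {N : Finset (α × β)} {lv : α → β → Bool}
    (hN : I.LevelStable N lv) {T : Finset (α × β)} (hT : I.Popular T) :
    (∀ a, (rowSet T a).card ≤ (rowSet N a).card) ∧
      ∀ b, (colSet T b).card ≤ (colSet N b).card := by
  have h := hN.surplus_le_Delta I hT.1
  have h' := hT.2 N hN.1
  have h'' := I.Delta_add_le T N
  have hz : ∑ a, ((rowSet T a).card - (rowSet N a).card) +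
      ∑ b, ((colSet T b).card - (colSet N b).card) = 0 := by
    zify
    refine le_antisymm (by linarith) (by positivity)
  rw [Nat.add_eq_zero_iff, Finset.sum_eq_zero_iff, Finset.sum_eq_zero_iff] at hz
  exact ⟨fun a => Nat.sub_eq_zero_iff_le.mp (hz.1 a (Finset.mem_univ a)),
    fun b => Nat.sub_eq_zero_iff_le.mp (hz.2 b (Finset.mem_univ b))⟩

lemma LevelStable.card_eq {N : Finset (α × β)} {lv : α → β → Bool}
    (hN : I.LevelStable N lv) {T : Finset (α × β)} (hT : I.Popular T) (hle : N.card ≤ T.card) :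
    (∀ a, (rowSet T a).card = (rowSet N a).card) ∧
      ∀ b, (colSet T b).card = (colSet N b).card := by
  obtain ⟨hA, hB⟩ := hN.card_le I hT
  have hA' := (Finset.sum_eq_sum_iff_of_le fun a (_ : a ∈ Finset.univ) => hA a).mp
    (le_antisymm (Finset.sum_le_sum fun a _ => hA a)
      (by rw [sum_card_rowSet, sum_card_rowSet]; exact hle))
  have hB' := (Finset.sum_eq_sum_iff_of_le fun b (_ : b ∈ Finset.univ) => hB b).mp
    (le_antisymm (Finset.sum_le_sum fun b _ => hB b)
      (by rw [sum_card_colSet, sum_card_colSet]; exact hle))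
  exact ⟨fun a => hA' a (Finset.mem_univ a), fun b => hB' b (Finset.mem_univ b)⟩

end PrefInstance

/-- Let `M` and `T` be popular matchings of `G`, each of maximum size
among all popular matchings of `G`. Then `|M(u)| = |T(u)|` for every vertex `u ∈ A ∪ B`;
in particular all maximum-size popular matchings match the same set of vertices. -/
theorem statement12 {α β : Type*} [Fintype α] [Fintype β] [DecidableEq α] [DecidableEq β]
    (I : PrefInstance α β) (M T : Finset (α × β))
    (hM : I.Popular M) (hT : I.Popular T)
    (hMmax : ∀ P : Finset (α × β), I.Popular P → P.card ≤ M.card)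
    (hTmax : ∀ P : Finset (α × β), I.Popular P → P.card ≤ T.card) :
    (∀ a : α, (PrefInstance.rowSet M a).card = (PrefInstance.rowSet T a).card) ∧
    (∀ b : β, (PrefInstance.colSet M b).card = (PrefInstance.colSet T b).card) := by
  obtain ⟨N, lv, hN⟩ := I.exists_levelStable
  obtain ⟨hMA, hMB⟩ := hN.card_eq I hM (hMmax N (hN.popular I))
  obtain ⟨hTA, hTB⟩ := hN.card_eq I hT (hTmax N (hN.popular I))
  exact ⟨fun a => (hMA a).trans (hTA a).symm, fun b => (hMB b).trans (hTB b).symm⟩
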